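/- Assume μ is a martingale measure. Let h* ∈ H be the minimizer of Σ_{n=1}^N E_μ[|(ᵒ𝔻f)_n − h_n|_*^q] over the set H of predictable processes with ‖h‖_{L^q(μ)} < ∞, set ρ = ‖ᵒ𝔻f − h*‖_{L^q(μ)}, let v(e) = (e_1 |e_1|^{q−2}, …, e_d |e_d|^{q−2}) and Φ_n = v((ᵒ𝔻f)_n − h*_n), and fix u > 0. For δ > 0 let π_δ = (Id, Id + u δ Δ^{−1} ∘ Φ)_# μ. Then: (a) E_μ[Φ_n | F_{n−1}] = 0 μ-a.s. for every n, and consequently the second marginal of π_δ is a martingale measure; (b) E_{π_δ}[c_N(X, Y)] = u^p ρ^q δ^p; (c) lim_{δ→0+} E_{π_δ}[f(Y) − f(X)]/δ = u ρ^q. -/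

import Mathlib

open MeasureTheory Filter Set
open scoped ENNReal

noncomputable section

/-- Discrete path space `X = (ℝ^d)^N`. -/
abbrev PathD (N d : ℕ) : Type := Fin N → Fin d → ℝ

/-- The `ℓ_e` norm on `ℝ^d`. -/
def lpnorm {d : ℕ} (e : ℝ) (v : Fin d → ℝ) : ℝ := (∑ i, |v i| ^ e) ^ (1 / e)

/-- Coordinate `x_n` of a path, with the convention `x_0 = 0` (and `x_n = 0` for `n > N`). -/
def coord {N d : ℕ} (x : PathD N d) (n : ℕ) : Fin d → ℝ :=
  if h : 1 ≤ n ∧ n ≤ N then x ⟨n - 1, by omega⟩ else 0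

/-- The cost `c_N(x,y) = Σ_{n=1}^N |Δx_n − Δy_n|^p` (with `|·|` the `ℓ_p` norm). -/
def cN {N d : ℕ} (p : ℝ) (x y : PathD N d) : ℝ :=
  ∑ n ∈ Finset.Icc 1 N,
    lpnorm p ((coord x n - coord x (n - 1)) - (coord y n - coord y (n - 1))) ^ p

/-- The σ-algebra `F_n = σ(x_1, …, x_n)` on the discrete path space. -/
def Fn (N d n : ℕ) : MeasurableSpace (PathD N d) :=
  MeasurableSpace.comap (fun x (i : Fin N) => if (i : ℕ) + 1 ≤ n then x i else 0) inferInstance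

/-- Conditional independence of `m₁` and `m₂` given `m'` under `π`, expressed through
conditional expectations of indicators. -/
def CondIndepOn {Ω : Type*} [MeasurableSpace Ω] (π : Measure Ω)
    (m' m₁ m₂ : MeasurableSpace Ω) : Prop :=
  ∀ A B : Set Ω, MeasurableSet[m₁] A → MeasurableSet[m₂] B →
    (π[(A ∩ B).indicator (fun _ => (1 : ℝ)) | m']) =ᵐ[π]
      (π[A.indicator (fun _ => (1 : ℝ)) | m']) * (π[B.indicator (fun _ => (1 : ℝ)) | m'])

/-- `π` is a coupling with first marginal `μ` which is causal to its second marginal: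
for every `n`, `σ(Y_1,…,Y_n)` is conditionally independent of `σ(X_1,…,X_N)` given `F_n`. -/
def IsCausalStar {N d : ℕ} (μ : Measure (PathD N d))
    (π : Measure (PathD N d × PathD N d)) : Prop :=
  π.map Prod.fst = μ ∧
  ∀ n : ℕ, CondIndepOn π ((Fn N d n).comap Prod.fst)
    ((Fn N d n).comap Prod.snd) ((Fn N d N).comap Prod.fst)

/-- `π` is a causal coupling of `(μ, ν)`. -/
def IsCausalCoupling {N d : ℕ} (μ ν : Measure (PathD N d))
    (π : Measure (PathD N d × PathD N d)) : Prop :=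
  π.map Prod.snd = ν ∧ IsCausalStar μ π

/-- `π` is a bicausal coupling of `(μ, ν)`: both `π` and its swap are causal. -/
def IsBicausalCoupling {N d : ℕ} (μ ν : Measure (PathD N d))
    (π : Measure (PathD N d × PathD N d)) : Prop :=
  IsCausalCoupling μ ν π ∧
  (∀ n : ℕ, CondIndepOn π ((Fn N d n).comap Prod.snd)
    ((Fn N d n).comap Prod.fst) ((Fn N d N).comap Prod.snd))

/-- `μ` is a martingale measure on the discrete path space: every coordinate is integrable
and `E_μ[X_n | F_{n−1}] = X_{n−1}` a.s. (with `X_0 = 0`). -/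
def IsMartingaleMeasure {N d : ℕ} (μ : Measure (PathD N d)) : Prop :=
  ∀ n : ℕ, 1 ≤ n → n ≤ N →
    Integrable (fun x => coord x n) μ ∧
    (μ[(fun x => coord x n) | Fn N d (n - 1)]) =ᵐ[μ] (fun x => coord x (n - 1))


/-- The discrete pathwise Malliavin derivative `𝔻_n f = Σ_{k=n}^N ∂_k f`, where `∂_k f` is the
`ℝ^d`-valued partial gradient of `f` in the `k`-th coordinate block (`k = 1, …, N`). -/
def Dn {N d : ℕ} (f : PathD N d → ℝ) (n : ℕ) (x : PathD N d) : Fin d → ℝ :=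
  fun j => ∑ k : Fin N, if n ≤ (k : ℕ) + 1 then
    fderiv ℝ f x (Pi.single k (Pi.single j 1)) else 0

/-- Standing assumptions on the penalty function `L : [0,∞) → [0,∞]`:
continuous, non-decreasing, `L(0) = 0` and `liminf_{u→∞} L(u)/u^p = +∞`. -/
structure PenaltyAssumptions (p : ℝ) (L : ℝ → ℝ≥0∞) : Prop where
  cont : ContinuousOn L (Set.Ici 0)
  mono : MonotoneOn L (Set.Ici 0)
  zero : L 0 = 0
  growth : Tendsto (fun u : ℝ => L u / ENNReal.ofReal (u ^ p)) atTop (nhds ⊤)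

/-- The convex conjugate `L*(v) = sup_{u ≥ 0} { u v − L(u) }`, valued in the extended reals. -/
def Lconj (L : ℝ → ℝ≥0∞) (v : ℝ) : EReal :=
  ⨆ u : {u : ℝ // 0 ≤ u}, ((u.1 * v : ℝ) : EReal) - ((L u.1 : ℝ≥0∞) : EReal)

/-- The expected transport cost `E_π[c_N(X,Y)]` of a coupling. -/
def costD {N d : ℕ} (p : ℝ) (π : Measure (PathD N d × PathD N d)) : ℝ :=
  ∫ z, cN p z.1 z.2 ∂π

/-- The penalised causal DRO value
`V(δ) = sup_{π ∈ Π_c(μ,*), E_π[c_N] < ∞} { E_π[f(Y)] − δ L(E_π[c_N(X,Y)]^{1/p}/δ) }`,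
valued in the extended reals. -/
def VD {N d : ℕ} (p : ℝ) (L : ℝ → ℝ≥0∞) (μ : Measure (PathD N d))
    (f : PathD N d → ℝ) (δ : ℝ) : EReal :=
  ⨆ π : {π : Measure (PathD N d × PathD N d) //
      IsProbabilityMeasure π ∧ IsCausalStar μ π ∧
      Integrable (fun z => cN p z.1 z.2) π},
    ((∫ z, f z.2 ∂π.1 : ℝ) : EReal) -
      ((ENNReal.ofReal δ * L ((costD p π.1) ^ (1 / p) / δ) : ℝ≥0∞) : EReal)

/-- The `L^q(μ)`-norm `(Σ_{n=1}^N E_μ[|E_μ[𝔻_n f(X)|F_n]|_*^q])^{1/q}` of the optional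
projection of the discrete pathwise Malliavin derivative. -/
def optionalNorm {N d : ℕ} (q : ℝ) (μ : Measure (PathD N d)) (f : PathD N d → ℝ) : ℝ :=
  (∑ n ∈ Finset.Icc 1 N, ∫ x, lpnorm q ((μ[Dn f n | Fn N d n]) x) ^ q ∂μ) ^ (1 / q)

/-- The map `v(e) = (e_1|e_1|^{q−2}, …, e_d|e_d|^{q−2})` on `ℝ^d`. -/
def vmap {d : ℕ} (q : ℝ) (e : Fin d → ℝ) : Fin d → ℝ :=
  fun i => e i * |e i| ^ (q - 2)

/-- The inverse `Δ^{-1}` of the increment map: `(Δ^{-1} y)_n = Σ_{k=1}^n y_k`. -/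
def DeltaInv {N d : ℕ} (y : PathD N d) : PathD N d :=
  fun i => ∑ k : Fin N, if (k : ℕ) ≤ (i : ℕ) then y k else 0

/-- A process `h = (h_n)_{n=1}^N` is predictable if `h_n` is `F_{n−1}`-measurable. -/
def IsPredictable {N d : ℕ} (h : ℕ → PathD N d → Fin d → ℝ) : Prop :=
  ∀ n : ℕ, 1 ≤ n → n ≤ N → Measurable[Fn N d (n - 1)] (h n)

end

open MeasureTheory Filter

section Vectors

lemma lpnorm_rpow {d : ℕ} {e : ℝ} (he : e ≠ 0) (v : Fin d → ℝ) :
    lpnorm e v ^ e = ∑ i, |v i| ^ e := by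
  rw [lpnorm, ← Real.rpow_mul (Finset.sum_nonneg fun i _ => by positivity),
    one_div_mul_cancel he, Real.rpow_one]

lemma lpnorm_nonneg {d : ℕ} (e : ℝ) (v : Fin d → ℝ) : 0 ≤ lpnorm e v :=
  Real.rpow_nonneg (Finset.sum_nonneg fun i _ => by positivity) _

lemma abs_le_lpnorm {d : ℕ} {e : ℝ} (he : 0 < e) (v : Fin d → ℝ) (i : Fin d) :
    |v i| ≤ lpnorm e v := by
  rw [← Real.rpow_le_rpow_iff (abs_nonneg _) (lpnorm_nonneg e v) he, lpnorm_rpow he.ne']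
  exact Finset.single_le_sum (f := fun i => |v i| ^ e) (fun i _ => by positivity)
    (Finset.mem_univ i)

lemma abs_vmap {d : ℕ} {q : ℝ} (hq : 1 < q) (v : Fin d → ℝ) (i : Fin d) :
    |vmap q v i| = |v i| ^ (q - 1) := by
  rcases eq_or_ne (v i) 0 with h | h
  · simp [vmap, h, Real.zero_rpow (sub_pos.2 hq).ne']
  · rw [vmap, abs_mul, abs_of_nonneg (Real.rpow_nonneg (abs_nonneg (v i)) _),
      show q - 1 = 1 + (q - 2) by ring, Real.rpow_add (abs_pos.2 h), Real.rpow_one]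

lemma vmap_mul_self {d : ℕ} {q : ℝ} (hq : 1 < q) (v : Fin d → ℝ) (i : Fin d) :
    vmap q v i * v i = |v i| ^ q := by
  rcases eq_or_ne (v i) 0 with h | h
  · simp [vmap, h, Real.zero_rpow (zero_lt_one.trans hq).ne']
  · rw [vmap, show q = 2 + (q - 2) by ring, Real.rpow_add (abs_pos.2 h), Real.rpow_two, sq_abs,
      show 2 + (q - 2) - 2 = q - 2 by ring]
    ring

lemma continuous_vmap {d : ℕ} {q : ℝ} (hq : 1 < q) :
    Continuous (vmap q : (Fin d → ℝ) → Fin d → ℝ) := by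
  have h0 : q - 1 ≠ 0 := (sub_pos.2 hq).ne'
  have key : (vmap q : (Fin d → ℝ) → Fin d → ℝ) =
      fun v i => max (v i) 0 ^ (q - 1) - max (-v i) 0 ^ (q - 1) := by
    funext v i
    rcases lt_trichotomy (v i) 0 with h | h | h
    · rw [max_eq_right h.le, max_eq_left (neg_nonneg.2 h.le), Real.zero_rpow h0, vmap,
        abs_of_neg h, show q - 1 = 1 + (q - 2) by ring, Real.rpow_add (neg_pos.2 h), Real.rpow_one]
      ring
    · simp [vmap, h, Real.zero_rpow h0]
    · rw [max_eq_left h.le, max_eq_right (neg_nonpos.2 h.le), Real.zero_rpow h0, vmap,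
        abs_of_pos h, show q - 1 = 1 + (q - 2) by ring, Real.rpow_add h, Real.rpow_one]
      ring
  rw [key]
  refine continuous_pi fun i => ?_
  exact ((by fun_prop : Continuous fun v : Fin d → ℝ => max (v i) 0).rpow_const
      fun _ => Or.inr (sub_pos.2 hq).le).sub
    ((by fun_prop : Continuous fun v : Fin d → ℝ => max (-v i) 0).rpow_const
      fun _ => Or.inr (sub_pos.2 hq).le)

/-- The gradient inequality for the convex function `v ↦ ∑ |v i| ^ q`. -/
lemma mul_vmap_mul_sub_le {d : ℕ} {p q : ℝ} (hpq : p.HolderConjugate q) (a b : Fin d → ℝ)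
    (i : Fin d) : q * (vmap q b i * (a i - b i)) ≤ |a i| ^ q - |b i| ^ q := by
  have h := Real.young_inequality (vmap q b i) (a i) hpq
  have hq := hpq.symm.lt
  have hb := vmap_mul_self hq b i
  rw [abs_vmap hq, ← Real.rpow_mul (abs_nonneg _), hpq.symm.sub_one_mul_conj] at h
  have hp : (1 : ℝ) / p = 1 - 1 / q := by simpa using hpq.symm.one_sub_inv.symm
  have h2 : vmap q b i * a i ≤ |b i| ^ q * (1 - 1 / q) + |a i| ^ q / q := by
    rw [← hp]; simpa [div_eq_mul_inv] using h
  have hq0 := hpq.symm.pos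
  have h3 := mul_le_mul_of_nonneg_left h2 hq0.le
  have h4 : q * (|b i| ^ q * (1 - 1 / q) + |a i| ^ q / q) = (q - 1) * |b i| ^ q + |a i| ^ q := by
    field_simp
  rw [h4] at h3
  rw [mul_sub, hb]
  linarith

lemma sum_Icc_one_eq_sum_fin {M : Type*} [AddCommMonoid M] (N : ℕ) (g : ℕ → M) :
    ∑ n ∈ Finset.Icc 1 N, g n = ∑ i : Fin N, g ((i : ℕ) + 1) := by
  rw [Fin.sum_univ_eq_sum_range (fun i => g (i + 1)), Finset.range_eq_Ico,
    Finset.sum_Ico_add' g 0 N 1, zero_add]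
  rfl

end Vectors

section Paths

variable {N d : ℕ}

lemma coord_add (x y : PathD N d) (n : ℕ) : coord (x + y) n = coord x n + coord y n := by
  unfold coord; split_ifs <;> simp

lemma coord_smul (c : ℝ) (x : PathD N d) (n : ℕ) : coord (c • x) n = c • coord x n := by
  unfold coord; split_ifs <;> simp

lemma coord_DeltaInv (y : PathD N d) {n : ℕ} (hn : n ≤ N) :
    coord (DeltaInv y) n = ∑ k : Fin N, if (k : ℕ) + 1 ≤ n then y k else 0 := by
  rcases Nat.eq_zero_or_pos n with rfl | h
  · simp [coord]
  · rw [coord, dif_pos ⟨h, hn⟩, DeltaInv]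
    refine Finset.sum_congr rfl fun k _ => ?_
    have : (k : ℕ) ≤ n - 1 ↔ (k : ℕ) + 1 ≤ n := by omega
    simp [this]

lemma coord_DeltaInv_succ_sub (y : PathD N d) (i : Fin N) :
    coord (DeltaInv y) ((i : ℕ) + 1) - coord (DeltaInv y) i = y i := by
  rw [coord_DeltaInv y i.2, coord_DeltaInv y i.2.le, ← Finset.sum_sub_distrib,
    Finset.sum_eq_single i]
  · simp
  · intro k _ hk
    have : (k : ℕ) ≠ i := fun h => hk (Fin.ext h)
    by_cases h : (k : ℕ) + 1 ≤ i
    · rw [if_pos h, if_pos (by omega), sub_self]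
    · rw [if_neg h, if_neg (by omega), sub_self]
  · simp

/-- The cost of a perturbation by the path with increments `c • y`. -/
lemma cN_add_smul_DeltaInv {p : ℝ} (hp : p ≠ 0) (x y : PathD N d) {c : ℝ} (hc : 0 ≤ c) :
    cN p x (x + c • DeltaInv y) = c ^ p * ∑ i : Fin N, ∑ j : Fin d, |y i j| ^ p := by
  rw [cN, sum_Icc_one_eq_sum_fin, Finset.mul_sum]
  refine Finset.sum_congr rfl fun i _ => ?_
  have : coord x ((i : ℕ) + 1) - coord x ((i : ℕ) + 1 - 1) -
      (coord (x + c • DeltaInv y) ((i : ℕ) + 1) - coord (x + c • DeltaInv y) ((i : ℕ) + 1 - 1)) =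
      -(c • y i) := by
    rw [← coord_DeltaInv_succ_sub y i]
    simp only [coord_add, coord_smul, Nat.add_sub_cancel, smul_sub]
    abel
  rw [this, lpnorm_rpow hp, Finset.mul_sum]
  refine Finset.sum_congr rfl fun j _ => ?_
  rw [Pi.neg_apply, abs_neg, Pi.smul_apply, smul_eq_mul, abs_mul, abs_of_nonneg hc,
    Real.mul_rpow hc (abs_nonneg _)]

/-- Summation by parts: the derivative along the path with increments `y` is the pairing of the
pathwise Malliavin derivative with `y`. -/
lemma fderiv_DeltaInv (f : PathD N d → ℝ) (x y : PathD N d) :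
    fderiv ℝ f x (DeltaInv y) = ∑ i : Fin N, ∑ j : Fin d, Dn f ((i : ℕ) + 1) x j * y i j := by
  have h1 : ∀ z : PathD N d, z = ∑ k, ∑ j, z k j • Pi.single k (Pi.single j (1 : ℝ)) := by
    intro z
    ext k j
    rw [Finset.sum_apply, Finset.sum_apply, Finset.sum_eq_single k, Finset.sum_apply,
      Finset.sum_apply, Finset.sum_eq_single j] <;> simp +contextual [Pi.single_apply]
  rw [h1 (DeltaInv y)]
  simp only [map_sum, map_smul, Dn, Finset.sum_mul, smul_eq_mul, DeltaInv, Finset.sum_apply]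
  rw [Finset.sum_comm]
  conv_rhs => rw [Finset.sum_comm]
  refine Finset.sum_congr rfl fun j _ => ?_
  rw [Finset.sum_comm]
  refine Finset.sum_congr rfl fun i _ => Finset.sum_congr rfl fun k _ => ?_
  by_cases h : (i : ℕ) ≤ k
  · simp [h, mul_comm]
  · simp [h]

lemma continuous_DeltaInv : Continuous (DeltaInv : PathD N d → PathD N d) := by
  refine continuous_pi fun i => continuous_finsetSum _ fun k _ => ?_
  split_ifs <;> fun_prop

lemma measurable_truncation (n : ℕ) :
    Measurable fun (x : PathD N d) (i : Fin N) => if (i : ℕ) + 1 ≤ n then x i else 0 := by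
  refine measurable_pi_iff.2 fun i => ?_
  split_ifs <;> fun_prop

lemma Fn_le (n : ℕ) : Fn N d n ≤ (inferInstance : MeasurableSpace (PathD N d)) :=
  (measurable_truncation n).comap_le

lemma measurable_Fn_apply {n : ℕ} {i : Fin N} (h : (i : ℕ) + 1 ≤ n) :
    Measurable[Fn N d n] fun x : PathD N d => x i := by
  have := (measurable_pi_apply i).comp
    (comap_measurable (fun (x : PathD N d) (i : Fin N) => if (i : ℕ) + 1 ≤ n then x i else 0))
  simp only [Function.comp_def, if_pos h] at this
  exact this

lemma Fn_mono {m n : ℕ} (h : m ≤ n) : Fn N d m ≤ Fn N d n := by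
  refine Measurable.comap_le ((@measurable_pi_iff _ _ _ (Fn N d n) _ _).2 fun i => ?_)
  split_ifs with hi
  · exact measurable_Fn_apply (hi.trans h)
  · exact measurable_const

lemma measurable_Fn_coord {n : ℕ} :
    Measurable[Fn N d n] fun x : PathD N d => coord x n := by
  unfold coord
  split_ifs with h
  · exact measurable_Fn_apply (by simp; omega)
  · exact measurable_const

/-- Adding to a path the path with adapted increments `c • Φ` is an adapted map. -/
lemma measurable_Fn_add_smul_DeltaInv {Φ : PathD N d → PathD N d}
    (hΦ : ∀ i : Fin N, Measurable[Fn N d ((i : ℕ) + 1)] fun x => Φ x i) (c : ℝ) (n : ℕ) :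
    Measurable[Fn N d n, Fn N d n] fun x => x + c • DeltaInv (Φ x) := by
  refine measurable_comap_iff.2 ((@measurable_pi_iff _ _ _ (Fn N d n) _ _).2 fun i => ?_)
  simp only [Function.comp_def]
  split_ifs with hi
  · refine (measurable_Fn_apply hi).add (Measurable.const_smul ?_ c)
    simp only [DeltaInv]
    refine Finset.measurable_sum _ fun k _ => ?_
    split_ifs with hk
    · exact (hΦ k).mono (Fn_mono (by omega)) le_rfl
    · exact measurable_const
  · exact measurable_const

/-- Perturbing a martingale by martingale increments yields a martingale measure. -/
lemma IsMartingaleMeasure.map_add_smul_DeltaInv {μ : Measure (PathD N d)} [IsProbabilityMeasure μ]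
    (hμ : IsMartingaleMeasure μ) {Φ : PathD N d → PathD N d}
    (hΦ : ∀ i : Fin N, Measurable[Fn N d ((i : ℕ) + 1)] fun x => Φ x i)
    (hint : ∀ i : Fin N, Integrable (fun x => Φ x i) μ)
    (hzero : ∀ i : Fin N, μ[fun x => Φ x i | Fn N d i] =ᵐ[μ] 0) (c : ℝ) :
    IsMartingaleMeasure (μ.map fun x => x + c • DeltaInv (Φ x)) := by
  set Y : PathD N d → PathD N d := fun x => x + c • DeltaInv (Φ x)
  have hYn : ∀ n, Measurable[Fn N d n, Fn N d n] Y := measurable_Fn_add_smul_DeltaInv hΦ c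
  have hY : Measurable Y := by
    refine measurable_id.add ((continuous_DeltaInv.measurable.comp ?_).const_smul c)
    exact measurable_pi_iff.2 fun i => (hΦ i).mono (Fn_le _) le_rfl
  have : IsProbabilityMeasure (μ.map Y) := Measure.isProbabilityMeasure_map hY.aemeasurable
  have hcoordm : ∀ n, Measurable fun x : PathD N d => coord x n := fun n =>
    measurable_Fn_coord.mono (Fn_le n) le_rfl
  have hcoord : ∀ n, n ≤ N → Integrable (fun x : PathD N d => coord x n) μ := by
    intro n hn
    rcases Nat.eq_zero_or_pos n with rfl | h
    · simp [coord]
    · exact (hμ n h hn).1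
  have hintY : ∀ n, n ≤ N → Integrable (fun x => coord x n) (μ.map Y) := by
    intro n hn
    rw [integrable_map_measure (hcoordm n).aestronglyMeasurable hY.aemeasurable]
    simp only [Function.comp_def, Y, coord_add, coord_smul, coord_DeltaInv _ hn]
    refine (hcoord n hn).add (Integrable.smul c (integrable_finsetSum _ fun k _ => ?_))
    split_ifs
    · exact hint k
    · simp
  intro n hn1 hnN
  refine ⟨hintY n hnN, ?_⟩
  obtain ⟨i, rfl⟩ : ∃ i : Fin N, (i : ℕ) + 1 = n := ⟨⟨n - 1, by omega⟩, by simp; omega⟩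
  simp only [Nat.add_sub_cancel]
  symm
  refine ae_eq_condExp_of_forall_setIntegral_eq (Fn_le _) (hintY _ hnN)
    (fun s _ _ => (hintY _ i.2.le).integrableOn) (fun s hs _ => ?_)
    (measurable_Fn_coord.stronglyMeasurable.aestronglyMeasurable)
  have hB : MeasurableSet[Fn N d i] (Y ⁻¹' s) := hYn i hs
  have h1 : ∫ x in Y ⁻¹' s, coord x ((i : ℕ) + 1) ∂μ = ∫ x in Y ⁻¹' s, coord x i ∂μ := by
    rw [← setIntegral_condExp (Fn_le _) (hcoord _ hnN) hB]
    exact integral_congr_ae (ae_restrict_of_ae (hμ _ hn1 hnN).2)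
  have h2 : ∫ x in Y ⁻¹' s, Φ x i ∂μ = 0 := by
    rw [← setIntegral_condExp (Fn_le _) (hint i) hB,
      integral_congr_ae (ae_restrict_of_ae (hzero i))]
    simp
  have hs' : MeasurableSet s := Fn_le _ s hs
  rw [setIntegral_map hs' (hcoordm _).aestronglyMeasurable hY.aemeasurable,
    setIntegral_map hs' (hcoordm _).aestronglyMeasurable hY.aemeasurable]
  have hstep : ∀ x, coord (Y x) ((i : ℕ) + 1) =
      coord (Y x) i + (coord x ((i : ℕ) + 1) - coord x i) + c • Φ x i := by
    intro x
    rw [← coord_DeltaInv_succ_sub (Φ x) i]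
    simp only [Y, coord_add, coord_smul, smul_sub]
    abel
  have hYi : Integrable (fun x => coord (Y x) i) μ :=
    (hintY _ i.2.le).comp_measurable hY
  simp only [hstep]
  have hsub : Integrable (fun x : PathD N d => coord x ((i : ℕ) + 1) - coord x i) μ :=
    (hcoord _ hnN).sub (hcoord _ i.2.le)
  rw [integral_add (f := fun x => coord (Y x) i + (coord x ((i : ℕ) + 1) - coord x i))
      (g := fun x => c • Φ x i) (hYi.add hsub).restrict ((hint i).smul c).restrict,
    integral_add hYi.restrict hsub.restrict, integral_sub (hcoord _ hnN).restrict
      (hcoord _ i.2.le).restrict, h1, integral_smul, h2]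
  simp

end Paths

section Integrability

variable {Ω : Type*} {m0 : MeasurableSpace Ω} {μ : Measure Ω} {d : ℕ} {p q : ℝ}

lemma memLp_ofReal_iff_integrable_abs_rpow {g : Ω → ℝ} (hg : AEStronglyMeasurable g μ)
    (hq : 0 < q) : MemLp g (ENNReal.ofReal q) μ ↔ Integrable (fun x => |g x| ^ q) μ := by
  rw [← integrable_norm_rpow_iff hg (by simpa using hq) ENNReal.ofReal_ne_top,
    ENNReal.toReal_ofReal hq.le]
  rfl

lemma MeasureTheory.MemLp.abs_rpow_sub_one (hpq : p.HolderConjugate q) {g : Ω → ℝ}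
    (hg : MemLp g (ENNReal.ofReal p) μ) :
    MemLp (fun x => |g x| ^ (p - 1)) (ENNReal.ofReal q) μ := by
  have hm : AEStronglyMeasurable (fun x => |g x| ^ (p - 1)) μ :=
    (hg.aestronglyMeasurable.aemeasurable.norm.pow_const _).aestronglyMeasurable
  rw [memLp_ofReal_iff_integrable_abs_rpow hm hpq.symm.pos]
  refine ((memLp_ofReal_iff_integrable_abs_rpow hg.aestronglyMeasurable hpq.pos).1 hg).congr
    (ae_of_all _ fun x => ?_)
  simp only
  rw [abs_of_nonneg (Real.rpow_nonneg (abs_nonneg _) _), ← Real.rpow_mul (abs_nonneg _),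
    hpq.sub_one_mul_conj]

lemma MeasureTheory.MemLp.vmap_apply (hpq : p.HolderConjugate q) {Z : Ω → Fin d → ℝ}
    (hZ : ∀ i, MemLp (fun x => Z x i) (ENNReal.ofReal q) μ) (i : Fin d) :
    MemLp (fun x => vmap q (Z x) i) (ENNReal.ofReal p) μ := by
  have hm : AEStronglyMeasurable (fun x => vmap q (Z x) i) μ :=
    ((continuous_apply i).comp (continuous_vmap hpq.symm.lt)).comp_aestronglyMeasurable
      (MemLp.of_eval hZ).aestronglyMeasurable
  refine (memLp_congr_norm hm ((hZ i).abs_rpow_sub_one hpq.symm).aestronglyMeasurable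
    (ae_of_all _ fun x => ?_)).2 ((hZ i).abs_rpow_sub_one hpq.symm)
  rw [Real.norm_eq_abs, Real.norm_eq_abs, abs_vmap hpq.symm.lt,
    abs_of_nonneg (Real.rpow_nonneg (abs_nonneg _) _)]

lemma integrable_mul_of_holderConjugate (hpq : p.HolderConjugate q) {g h : Ω → ℝ}
    (hg : MemLp g (ENNReal.ofReal p) μ) (hh : MemLp h (ENNReal.ofReal q) μ) :
    Integrable (fun x => g x * h x) μ := by
  have := hpq.ennrealOfReal
  exact hg.integrable_mul hh

lemma integrable_lpnorm_rpow_iff (hq : 0 < q) {v : Ω → Fin d → ℝ}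
    (hv : AEStronglyMeasurable v μ) :
    Integrable (fun x => lpnorm q (v x) ^ q) μ ↔
      ∀ i, MemLp (fun x => v x i) (ENNReal.ofReal q) μ := by
  have hvi : ∀ i, AEStronglyMeasurable (fun x => v x i) μ := fun i =>
    (continuous_apply i).comp_aestronglyMeasurable hv
  simp only [lpnorm_rpow hq.ne', memLp_ofReal_iff_integrable_abs_rpow (hvi _) hq]
  refine ⟨fun h i => h.mono' ?_ (ae_of_all _ fun x => ?_), fun h => integrable_finsetSum _
    fun i _ => h i⟩
  · exact ((hvi i).aemeasurable.norm.pow_const _).aestronglyMeasurable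
  · rw [Real.norm_of_nonneg (Real.rpow_nonneg (abs_nonneg _) _)]
    exact Finset.single_le_sum (f := fun i => |v x i| ^ q) (fun i _ => by positivity)
      (Finset.mem_univ i)

/-- First-order condition for the minimality of `t ↦ ∫ ∑ |Z i - t * g i| ^ q` at `t = 0`. -/
lemma integral_sum_vmap_mul_nonpos (hpq : p.HolderConjugate q) {Z g : Ω → Fin d → ℝ}
    (hZ : ∀ i, MemLp (fun x => Z x i) (ENNReal.ofReal q) μ)
    (hg : ∀ i, MemLp (fun x => g x i) (ENNReal.ofReal q) μ)
    (hmin : ∀ t : ℝ, 0 < t →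
      ∫ x, ∑ i, |Z x i| ^ q ∂μ ≤ ∫ x, ∑ i, |(Z x - t • g x) i| ^ q ∂μ) :
    ∫ x, ∑ i, vmap q (Z x) i * g x i ∂μ ≤ 0 := by
  have hq0 := hpq.symm.pos
  have hcv := continuous_vmap (d := d) hpq.symm.lt
  have hZt : ∀ (t : ℝ) i, MemLp (fun x => (Z x - t • g x) i) (ENNReal.ofReal q) μ := fun t i =>
    (hZ i).sub ((hg i).const_mul t)
  have hint : ∀ (v : Ω → Fin d → ℝ), (∀ i, MemLp (fun x => v x i) (ENNReal.ofReal q) μ) →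
      Integrable (fun x => ∑ i, |v x i| ^ q) μ := fun v hv => integrable_finsetSum _ fun i _ =>
    (memLp_ofReal_iff_integrable_abs_rpow (hv i).aestronglyMeasurable hq0).1 (hv i)
  have hprod : ∀ t : ℝ, Integrable (fun x => ∑ i, vmap q (Z x - t • g x) i * g x i) μ :=
    fun t => integrable_finsetSum _ fun i _ =>
      integrable_mul_of_holderConjugate hpq (MemLp.vmap_apply hpq (hZt t) i) (hg i)
  have hneg : ∀ t : ℝ, 0 < t → ∫ x, ∑ i, vmap q (Z x - t • g x) i * g x i ∂μ ≤ 0 := by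
    intro t ht
    have h1 : ∫ x, q * t * ∑ i, vmap q (Z x - t • g x) i * g x i ∂μ ≤
        ∫ x, (∑ i, |Z x i| ^ q - ∑ i, |(Z x - t • g x) i| ^ q) ∂μ := by
      refine integral_mono ((hprod t).const_mul _) ((hint Z hZ).sub (hint _ (hZt t))) fun x => ?_
      simp only [← Finset.sum_sub_distrib, Finset.mul_sum]
      refine Finset.sum_le_sum fun i _ => ?_
      have := mul_vmap_mul_sub_le hpq (Z x) (Z x - t • g x) i
      have h2 : Z x i - (Z x - t • g x) i = t * g x i := by simp
      rw [h2] at this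
      linarith
    rw [integral_const_mul, integral_sub (hint Z hZ) (hint _ (hZt t))] at h1
    have h3 := hmin t ht
    have h4 : 0 < q * t := mul_pos hq0 ht
    by_contra! h5
    linarith [mul_pos h4 h5]
  have hlim : Tendsto (fun t : ℝ => ∫ x, ∑ i, vmap q (Z x - t • g x) i * g x i ∂μ)
      (nhdsWithin 0 (Set.Ioi 0)) (nhds (∫ x, ∑ i, vmap q (Z x) i * g x i ∂μ)) := by
    refine tendsto_integral_filter_of_dominated_convergence
      (fun x => ∑ i, |(|Z x i| + |g x i|)| ^ q) ?_ ?_ ?_ ?_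
    · exact Eventually.of_forall fun t => (hprod t).aestronglyMeasurable
    · filter_upwards [Ioo_mem_nhdsGT (zero_lt_one (α := ℝ))] with t ht
      refine ae_of_all _ fun x => (norm_sum_le _ _).trans (Finset.sum_le_sum fun i _ => ?_)
      rw [norm_mul, Real.norm_eq_abs, Real.norm_eq_abs, abs_vmap hpq.symm.lt]
      have hle : |(Z x - t • g x) i| ≤ |Z x i| + |g x i| := by
        refine (abs_sub _ _).trans (add_le_add le_rfl ?_)
        rw [Pi.smul_apply, smul_eq_mul, abs_mul, abs_of_pos ht.1]
        exact mul_le_of_le_one_left (abs_nonneg _) ht.2.le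
      have hs : 0 ≤ |Z x i| + |g x i| := by positivity
      rw [abs_of_nonneg hs]
      calc _ ≤ (|Z x i| + |g x i|) ^ (q - 1) * (|Z x i| + |g x i|) := by
            gcongr
            · exact hpq.symm.sub_one_pos.le
            · linarith [abs_nonneg (Z x i)]
        _ = _ := by
            rw [← Real.rpow_add_one' hs (by simpa using hq0.ne'), sub_add_cancel]
    · exact hint (fun x i => |Z x i| + |g x i|) fun i => (hZ i).abs.add (hg i).abs
    · refine ae_of_all _ fun x => tendsto_nhdsWithin_of_tendsto_nhds ?_
      have hc : Continuous fun t : ℝ => ∑ i, vmap q (Z x - t • g x) i * g x i := by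
        refine continuous_finsetSum _ fun i _ => ((continuous_apply i).comp (hcv.comp ?_)).mul
          continuous_const
        fun_prop
      simpa using hc.tendsto 0
  exact le_of_tendsto hlim (eventually_mem_nhdsWithin.mono fun t ht => hneg t ht)

/-- The residual `Z` of an `L^q`-projection on the `m`-measurable random vectors satisfies
`E[vmap q Z | m] = 0`. -/
lemma condExp_vmap_eq_zero [IsFiniteMeasure μ] (hpq : p.HolderConjugate q) {m : MeasurableSpace Ω}
    (hm : m ≤ m0) {Z : Ω → Fin d → ℝ}
    (hZ : ∀ i, MemLp (fun x => Z x i) (ENNReal.ofReal q) μ)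
    (hmin : ∀ g : Ω → Fin d → ℝ, Measurable[m] g →
      (∀ i, MemLp (fun x => g x i) (ENNReal.ofReal q) μ) →
      ∫ x, ∑ i, |Z x i| ^ q ∂μ ≤ ∫ x, ∑ i, |(Z x - g x) i| ^ q ∂μ) :
    μ[fun x => vmap q (Z x) | m] =ᵐ[μ] 0 := by
  have hvi : ∀ i, Integrable (fun x => vmap q (Z x) i) μ := fun i =>
    (MemLp.vmap_apply hpq hZ i).integrable (by simpa using hpq.lt.le)
  have hle : ∀ (s : Set Ω) (j : Fin d) (a : ℝ), MeasurableSet[m] s →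
      a * ∫ x in s, vmap q (Z x) j ∂μ ≤ 0 := by
    intro s j a hs
    set g : Ω → Fin d → ℝ := s.indicator fun _ => Pi.single j a
    have hgm : Measurable[m] g := measurable_const.indicator hs
    have hg : ∀ i, MemLp (fun x => g x i) (ENNReal.ofReal q) μ := fun i => by
      have : (fun x => g x i) = s.indicator fun _ => (Pi.single j a : Fin d → ℝ) i := by
        funext x
        by_cases hx : x ∈ s <;> simp [g, hx]
      rw [this]
      exact (memLp_const _).indicator (hm s hs)
    have h := integral_sum_vmap_mul_nonpos hpq hZ hg fun t _ =>
      hmin (fun x => t • g x) (hgm.const_smul t) fun i => (hg i).const_mul t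
    rw [← integral_const_mul, ← integral_indicator (hm s hs)]
    refine le_of_eq_of_le (integral_congr_ae (ae_of_all _ fun x => ?_)) h
    by_cases hx : x ∈ s
    · simp [g, hx, Pi.single_apply, mul_comm]
    · simp [g, hx]
  symm
  refine ae_eq_condExp_of_forall_setIntegral_eq hm (Integrable.of_eval hvi)
    (fun s _ _ => integrableOn_zero) (fun s hs _ => ?_) aestronglyMeasurable_zero
  funext j
  rw [eval_integral fun i => (hvi i).restrict, Pi.zero_def, integral_zero, Pi.zero_apply]
  linarith [hle s j 1 hs, hle s j (-1) hs]

lemma condExp_apply_ae_eq [IsFiniteMeasure μ] {m : MeasurableSpace Ω} {v : Ω → Fin d → ℝ}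
    (hv : Integrable v μ) (i : Fin d) :
    (fun x => (μ[v | m]) x i) =ᵐ[μ] μ[fun x => v x i | m] :=
  (ContinuousLinearMap.proj (R := ℝ) (φ := fun _ : Fin d => ℝ) i).comp_condExp_comm hv

lemma integral_condExp_mul [IsFiniteMeasure μ] {m : MeasurableSpace Ω} (hm : m ≤ m0) {g h : Ω → ℝ}
    (hg : Integrable g μ) (hh : StronglyMeasurable[m] h)
    (hgh : Integrable (fun x => g x * h x) μ) :
    ∫ x, (μ[g | m]) x * h x ∂μ = ∫ x, g x * h x ∂μ := by
  rw [← integral_condExp hm (f := fun x => g x * h x)]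
  exact integral_congr_ae (condExp_mul_of_stronglyMeasurable_right hh hgh hg).symm

end Integrability

section Derivative

variable {N d : ℕ} {p q : ℝ}

lemma continuous_Dn {f : PathD N d → ℝ} (hf : ContDiff ℝ 1 f) (n : ℕ) : Continuous (Dn f n) := by
  have := hf.continuous_fderiv one_ne_zero
  refine continuous_pi fun j => continuous_finsetSum _ fun k _ => ?_
  split_ifs <;> fun_prop

/-- Differentiation under the integral along the direction with increments `Φ`. -/
lemma hasDerivAt_integral_add_smul_DeltaInv (hpq : p.HolderConjugate q) {μ : Measure (PathD N d)}
    [IsProbabilityMeasure μ] (hX : MemLp (fun x : PathD N d => x) (ENNReal.ofReal p) μ)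
    {f : PathD N d → ℝ} (hf : ContDiff ℝ 1 f) {C : ℝ}
    (hgrow : ∀ n x j, |Dn f n x j| ≤ C * (1 + ‖x‖ ^ (p - 1)))
    {Φ : PathD N d → PathD N d} (hΦm : Measurable Φ)
    (hΦ : ∀ i j, MemLp (fun x => Φ x i j) (ENNReal.ofReal p) μ) :
    HasDerivAt (fun c : ℝ => ∫ x, (f (x + c • DeltaInv (Φ x)) - f x) ∂μ)
      (∫ x, ∑ i : Fin N, ∑ j : Fin d, Dn f ((i : ℕ) + 1) x j * Φ x i j ∂μ) 0 := by
  have hWm : Measurable fun x => DeltaInv (Φ x) := continuous_DeltaInv.measurable.comp hΦm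
  have hW : MemLp (fun x => DeltaInv (Φ x)) (ENNReal.ofReal p) μ := by
    refine MemLp.of_eval fun i => memLp_finsetSum _ fun k _ => ?_
    split_ifs
    · exact MemLp.of_eval (hΦ k)
    · exact MemLp.zero
  have hS : MemLp (fun x => ‖x‖ + ‖DeltaInv (Φ x)‖) (ENNReal.ofReal p) μ := hX.norm.add hW.norm
  have hK : MemLp (fun x => C * (1 + |‖x‖ + ‖DeltaInv (Φ x)‖| ^ (p - 1))) (ENNReal.ofReal q) μ :=
    (MemLp.add (memLp_const (1 : ℝ)) (hS.abs_rpow_sub_one hpq)).const_mul C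
  have hfd := hf.differentiable one_ne_zero
  have key := hasDerivAt_integral_of_dominated_loc_of_deriv_le
    (F := fun (c : ℝ) x => f (x + c • DeltaInv (Φ x)) - f x)
    (F' := fun c x => fderiv ℝ f (x + c • DeltaInv (Φ x)) (DeltaInv (Φ x)))
    (bound := fun x => ∑ i : Fin N, ∑ j : Fin d,
      C * (1 + |‖x‖ + ‖DeltaInv (Φ x)‖| ^ (p - 1)) * |Φ x i j|) (x₀ := 0) (μ := μ)
    (Metric.ball_mem_nhds (0 : ℝ) one_pos) ?_ ?_ ?_ ?_ ?_ ?_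
  · simpa only [zero_smul, add_zero, fderiv_DeltaInv] using key.2
  · exact Eventually.of_forall fun c => ((hf.continuous.measurable.comp
      (measurable_id.add (hWm.const_smul c))).sub hf.continuous.measurable).aestronglyMeasurable
  · simp
  · simp only [zero_smul, add_zero, fderiv_DeltaInv]
    refine (Finset.measurable_sum _ fun i _ => Finset.measurable_sum _ fun j _ =>
      Measurable.mul ?_ ?_).aestronglyMeasurable
    · exact ((continuous_apply j).comp (continuous_Dn hf _)).measurable
    · fun_prop
  · refine ae_of_all _ fun x c hc => ?_
    rw [fderiv_DeltaInv]
    refine (norm_sum_le _ _).trans (Finset.sum_le_sum fun i _ => (norm_sum_le _ _).trans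
      (Finset.sum_le_sum fun j _ => ?_))
    rw [norm_mul, Real.norm_eq_abs, Real.norm_eq_abs]
    refine mul_le_mul_of_nonneg_right ((hgrow _ _ j).trans ?_) (abs_nonneg _)
    have hC : 0 ≤ C := by
      have := (abs_nonneg _).trans (hgrow 0 0 j)
      rw [norm_zero, Real.zero_rpow hpq.sub_one_pos.ne'] at this
      linarith
    have hle : ‖x + c • DeltaInv (Φ x)‖ ≤ |‖x‖ + ‖DeltaInv (Φ x)‖| := by
      refine (norm_add_le _ _).trans (le_trans (add_le_add le_rfl ?_) (le_abs_self _))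
      rw [norm_smul]
      exact mul_le_of_le_one_left (norm_nonneg _) (mem_ball_zero_iff.1 hc).le
    have := hpq.sub_one_pos.le
    gcongr
  · exact integrable_finsetSum _ fun i _ => integrable_finsetSum _ fun j _ =>
      integrable_mul_of_holderConjugate hpq.symm hK (hΦ i j).abs
  · refine ae_of_all _ fun x c _ => ?_
    have h1 : HasDerivAt (fun c : ℝ => x + c • DeltaInv (Φ x)) (DeltaInv (Φ x)) c := by
      simpa using ((hasDerivAt_id c).smul_const (DeltaInv (Φ x))).const_add x
    exact ((hfd _).hasFDerivAt.comp_hasDerivAt c h1).sub_const (f x)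

end Derivative

/-- First-order optimal martingale perturbations. With `h*` the predictable
`L^q`-projection of `ᵒ𝔻f`, `ρ = ‖ᵒ𝔻f − h*‖_{L^q(μ)}`, `Φ_n = v((ᵒ𝔻f)_n − h*_n)`, `u > 0`
and `π_δ = (Id, Id + uδ Δ^{-1}∘Φ)_# μ`:
(a) `E_μ[Φ_n | F_{n−1}] = 0` a.s. and the second marginal of `π_δ` is a martingale measure;
(b) `E_{π_δ}[c_N(X,Y)] = u^p ρ^q δ^p`;
(c) `lim_{δ→0+} E_{π_δ}[f(Y) − f(X)]/δ = u ρ^q`. -/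
theorem statement_14 {N d : ℕ} (p q : ℝ) (hp : 1 < p) (hq : q = p / (p - 1))
    (μ : Measure (PathD N d)) [IsProbabilityMeasure μ]
    (hmart : IsMartingaleMeasure μ)
    (hmom : Integrable (fun x : PathD N d => ‖x‖ ^ p) μ)
    (f : PathD N d → ℝ) (hf : ContDiff ℝ 1 f)
    (C : ℝ) (hgrow : ∀ n : ℕ, ∀ x : PathD N d,
      lpnorm q (Dn f n x) ≤ C * (1 + ‖x‖ ^ (p - 1)))
    (hstar : ℕ → PathD N d → Fin d → ℝ)
    (hpred : IsPredictable hstar)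
    (hstarint : ∀ n : ℕ, 1 ≤ n → n ≤ N → Integrable (fun x => lpnorm q (hstar n x) ^ q) μ)
    (hmin : ∀ h : ℕ → PathD N d → Fin d → ℝ, IsPredictable h →
      (∀ n : ℕ, 1 ≤ n → n ≤ N → Integrable (fun x => lpnorm q (h n x) ^ q) μ) →
      (∑ n ∈ Finset.Icc 1 N, ∫ x, lpnorm q ((μ[Dn f n | Fn N d n]) x - hstar n x) ^ q ∂μ) ≤
        ∑ n ∈ Finset.Icc 1 N, ∫ x, lpnorm q ((μ[Dn f n | Fn N d n]) x - h n x) ^ q ∂μ)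
    (ρ : ℝ)
    (hρ : ρ = (∑ n ∈ Finset.Icc 1 N,
      ∫ x, lpnorm q ((μ[Dn f n | Fn N d n]) x - hstar n x) ^ q ∂μ) ^ (1 / q))
    (u : ℝ) (hu : 0 < u)
    (πδ : ℝ → Measure (PathD N d × PathD N d))
    (hπδ : ∀ δ : ℝ, πδ δ =
      μ.map (fun x => (x, x + (u * δ) • DeltaInv (fun i : Fin N =>
        vmap q ((μ[Dn f ((i : ℕ) + 1) | Fn N d ((i : ℕ) + 1)]) x - hstar ((i : ℕ) + 1) x))))) :
    (∀ n : ℕ, 1 ≤ n → n ≤ N →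
      (μ[(fun x => vmap q ((μ[Dn f n | Fn N d n]) x - hstar n x)) | Fn N d (n - 1)]) =ᵐ[μ] 0) ∧
    (∀ δ : ℝ, 0 < δ → IsMartingaleMeasure ((πδ δ).map Prod.snd)) ∧
    (∀ δ : ℝ, 0 < δ → costD p (πδ δ) = u ^ p * ρ ^ q * δ ^ p) ∧
    Tendsto (fun δ : ℝ => (∫ z, (f z.2 - f z.1) ∂(πδ δ)) / δ)
      (nhdsWithin 0 (Set.Ioi 0)) (nhds (u * ρ ^ q)) := by
  have hpq : p.HolderConjugate q := hq ▸ Real.HolderConjugate.conjExponent hp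
  have hq1 := hpq.symm.lt
  have hq0 := hpq.symm.pos
  have hqE : 1 ≤ ENNReal.ofReal q := by simpa using hq1.le
  have hpE : 1 ≤ ENNReal.ofReal p := by simpa using hp.le
  have hX : MemLp (fun x : PathD N d => x) (ENNReal.ofReal p) μ := by
    have hid : AEStronglyMeasurable (fun x : PathD N d => x) μ :=
      measurable_id.aestronglyMeasurable
    rw [← memLp_norm_iff hid, memLp_ofReal_iff_integrable_abs_rpow hid.norm hpq.pos]
    simpa only [abs_norm] using hmom
  have hgrow' : ∀ n x j, |Dn f n x j| ≤ C * (1 + ‖x‖ ^ (p - 1)) := fun n x j =>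
    (abs_le_lpnorm hq0 _ j).trans (hgrow n x)
  have hD : ∀ n j, MemLp (fun x => Dn f n x j) (ENNReal.ofReal q) μ := by
    intro n j
    have h1 : MemLp (fun x : PathD N d => |‖x‖| ^ (p - 1)) (ENNReal.ofReal q) μ :=
      hX.norm.abs_rpow_sub_one hpq
    have h2 : MemLp (fun x : PathD N d => 1 + |‖x‖| ^ (p - 1)) (ENNReal.ofReal q) μ :=
      (memLp_const (1 : ℝ)).add h1
    have hc : Continuous fun x => Dn f n x j := (continuous_apply j).comp (continuous_Dn hf n)
    refine (h2.const_mul C).mono' hc.aestronglyMeasurable (ae_of_all _ fun x => ?_)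
    simpa only [abs_norm, Real.norm_eq_abs] using hgrow' n x j
  have hDint : ∀ n, Integrable (Dn f n) μ := fun n =>
    Integrable.of_eval fun j => (hD n j).integrable hqE
  set Z : ℕ → PathD N d → Fin d → ℝ := fun n x => (μ[Dn f n | Fn N d n]) x - hstar n x
  have hhm : ∀ i : Fin N, Measurable[Fn N d i] (hstar ((i : ℕ) + 1)) := fun i =>
    hpred _ (by omega) i.2
  have hh : ∀ (i : Fin N) j, MemLp (fun x => hstar ((i : ℕ) + 1) x j) (ENNReal.ofReal q) μ :=
    fun i => (integrable_lpnorm_rpow_iff hq0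
      ((hhm i).mono (Fn_le _) le_rfl).aestronglyMeasurable).1 (hstarint _ (by omega) i.2)
  have hZ : ∀ (i : Fin N) j, MemLp (fun x => Z ((i : ℕ) + 1) x j) (ENNReal.ofReal q) μ :=
    fun i j => ((MemLp.of_eval (hD _)).condExp hqE).eval j |>.sub (hh i j)
  have hZm : ∀ i : Fin N, Measurable[Fn N d ((i : ℕ) + 1)] (Z ((i : ℕ) + 1)) := fun i =>
    stronglyMeasurable_condExp.measurable.sub ((hhm i).mono (Fn_mono (Nat.le_succ _)) le_rfl)
  set Φ : PathD N d → PathD N d := fun x i => vmap q (Z ((i : ℕ) + 1) x) with hΦdef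
  have hΦm : ∀ i : Fin N, Measurable[Fn N d ((i : ℕ) + 1)] fun x => Φ x i := fun i =>
    (continuous_vmap hq1).measurable.comp (hZm i)
  have hΦmeas : Measurable Φ := measurable_pi_iff.2 fun i => (hΦm i).mono (Fn_le _) le_rfl
  have hΦ : ∀ i j, MemLp (fun x => Φ x i j) (ENNReal.ofReal p) μ := fun i j =>
    MemLp.vmap_apply hpq (hZ i) j
  have hΦint : ∀ i, Integrable (fun x => Φ x i) μ := fun i =>
    Integrable.of_eval fun j => (hΦ i j).integrable hpE
  have hΦzero : ∀ i : Fin N, μ[fun x => Φ x i | Fn N d i] =ᵐ[μ] 0 := by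
    intro i
    refine condExp_vmap_eq_zero hpq (Fn_le _) (hZ i) fun g hgm hg => ?_
    set h : ℕ → PathD N d → Fin d → ℝ :=
      Function.update hstar ((i : ℕ) + 1) fun x => hstar ((i : ℕ) + 1) x + g x
    have hhi : h ((i : ℕ) + 1) = fun x => hstar ((i : ℕ) + 1) x + g x := by simp [h]
    have hhk : ∀ k, k ≠ (i : ℕ) + 1 → h k = hstar k := fun k hk => by simp [h, hk]
    have hle := hmin h ?_ ?_
    · have hmem : (i : ℕ) + 1 ∈ Finset.Icc 1 N := by simp
      rw [← Finset.add_sum_erase _ _ hmem, ← Finset.add_sum_erase _ _ hmem,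
        Finset.sum_congr rfl (g := fun n => ∫ x, lpnorm q ((μ[Dn f n | Fn N d n]) x - h n x) ^ q ∂μ)
          fun k hk => by rw [hhk k (Finset.ne_of_mem_erase hk)]] at hle
      have := le_of_add_le_add_right hle
      simpa only [lpnorm_rpow hq0.ne', hhi, Z, sub_sub] using this
    · intro n hn1 hnN
      rcases eq_or_ne n ((i : ℕ) + 1) with rfl | hne
      · rw [hhi]
        exact (hhm i).add hgm
      · rw [hhk n hne]
        exact hpred n hn1 hnN
    · intro n hn1 hnN
      rcases eq_or_ne n ((i : ℕ) + 1) with rfl | hne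
      · have hm : Measurable fun x => hstar ((i : ℕ) + 1) x + g x :=
          ((hhm i).add hgm).mono (Fn_le _) le_rfl
        rw [hhi]
        exact (integrable_lpnorm_rpow_iff hq0 hm.aestronglyMeasurable).2
          fun j => (hh i j).add (hg j)
      · rw [hhk n hne]
        exact hstarint n hn1 hnN
  have hYm : ∀ c : ℝ, Measurable fun x => x + c • DeltaInv (Φ x) := fun c =>
    measurable_id.add ((continuous_DeltaInv.measurable.comp hΦmeas).const_smul c)
  have hXYm : ∀ c : ℝ, Measurable fun x => (x, x + c • DeltaInv (Φ x)) := fun c =>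
    measurable_id.prodMk (hYm c)
  have hρq : ρ ^ q = ∑ i : Fin N, ∑ j : Fin d, ∫ x, |Z ((i : ℕ) + 1) x j| ^ q ∂μ := by
    rw [hρ, ← Real.rpow_mul (Finset.sum_nonneg fun n _ => integral_nonneg fun x =>
      Real.rpow_nonneg (lpnorm_nonneg _ _) _), one_div_mul_cancel hq0.ne', Real.rpow_one,
      sum_Icc_one_eq_sum_fin]
    refine Finset.sum_congr rfl fun i _ => ?_
    simp only [lpnorm_rpow hq0.ne']
    exact integral_finsetSum _ fun j _ =>
      (memLp_ofReal_iff_integrable_abs_rpow (hZ i j).aestronglyMeasurable hq0).1 (hZ i j)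
  refine ⟨fun n hn1 hnN => ?_, fun δ _ => ?_, fun δ hδ => ?_, ?_⟩
  · obtain ⟨i, rfl⟩ : ∃ i : Fin N, (i : ℕ) + 1 = n := ⟨⟨n - 1, by omega⟩, by simp; omega⟩
    exact hΦzero i
  · rw [hπδ, Measure.map_map measurable_snd (hXYm _)]
    exact hmart.map_add_smul_DeltaInv hΦm hΦint hΦzero _
  · have hcm : Continuous fun z : PathD N d × PathD N d => cN p z.1 z.2 := by
      have hc : ∀ n, Continuous fun x : PathD N d => coord x n := fun n => by
        unfold coord
        split_ifs <;> fun_prop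
      simp only [cN, lpnorm_rpow hpq.pos.ne']
      refine continuous_finsetSum _ fun n _ => continuous_finsetSum _ fun j _ =>
        Continuous.rpow_const ?_ fun _ => Or.inr hpq.pos.le
      exact ((continuous_apply j).comp ((((hc n).comp continuous_fst).sub
        ((hc (n - 1)).comp continuous_fst)).sub (((hc n).comp continuous_snd).sub
        ((hc (n - 1)).comp continuous_snd)))).abs
    have hc0 : 0 ≤ u * δ := (mul_pos hu hδ).le
    rw [costD, hπδ, integral_map (hXYm _).aemeasurable hcm.aestronglyMeasurable]
    have hpow : ∀ x i j, |Φ x i j| ^ p = |Z ((i : ℕ) + 1) x j| ^ q := fun x i j => by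
      rw [hΦdef, abs_vmap hq1, ← Real.rpow_mul (abs_nonneg _), hpq.symm.sub_one_mul_conj]
    have hZint := fun i j =>
      (memLp_ofReal_iff_integrable_abs_rpow (hZ i j).aestronglyMeasurable hq0).1 (hZ i j)
    calc _ = ∫ x, (u * δ) ^ p * ∑ i : Fin N, ∑ j : Fin d, |Z ((i : ℕ) + 1) x j| ^ q ∂μ := by
          refine integral_congr_ae (ae_of_all _ fun x => ?_)
          simp only [← hpow]
          exact cN_add_smul_DeltaInv hpq.pos.ne' x (Φ x) hc0
      _ = (u * δ) ^ p * ρ ^ q := by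
          rw [integral_const_mul, hρq, integral_finsetSum _ fun i _ =>
            integrable_finsetSum _ fun j _ => hZint i j]
          congr 1
          exact Finset.sum_congr rfl fun i _ => integral_finsetSum _ fun j _ => hZint i j
      _ = u ^ p * ρ ^ q * δ ^ p := by
          rw [Real.mul_rpow hu.le hδ.le]
          ring
  · have hpair : ∀ (i : Fin N) (j : Fin d), ∫ x, Dn f ((i : ℕ) + 1) x j * Φ x i j ∂μ =
        ∫ x, |Z ((i : ℕ) + 1) x j| ^ q ∂μ := by
      intro i j
      have hΦij : StronglyMeasurable[Fn N d ((i : ℕ) + 1)] fun x => Φ x i j :=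
        ((measurable_pi_apply j).comp (hΦm i)).stronglyMeasurable
      have hhij : StronglyMeasurable[Fn N d i] fun x => hstar ((i : ℕ) + 1) x j :=
        ((measurable_pi_apply j).comp (hhm i)).stronglyMeasurable
      have hΦh := integrable_mul_of_holderConjugate hpq (hΦ i j) (hh i j)
      have hΦZ := integrable_mul_of_holderConjugate hpq (hΦ i j) (hZ i j)
      have horth : ∫ x, Φ x i j * hstar ((i : ℕ) + 1) x j ∂μ = 0 := by
        rw [← integral_condExp_mul (Fn_le _) ((hΦ i j).integrable hpE) hhij hΦh]
        refine integral_eq_zero_of_ae ?_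
        filter_upwards [hΦzero i, condExp_apply_ae_eq (m := Fn N d i) (hΦint i) j] with x h1 h2
        rw [← h2, h1]
        simp
      rw [← integral_condExp_mul (Fn_le _) ((hD _ j).integrable hqE) hΦij
        (integrable_mul_of_holderConjugate hpq.symm (hD _ j) (hΦ i j))]
      calc _ = ∫ x, (Φ x i j * Z ((i : ℕ) + 1) x j +
            Φ x i j * hstar ((i : ℕ) + 1) x j) ∂μ := by
            refine integral_congr_ae ?_
            filter_upwards [condExp_apply_ae_eq (m := Fn N d ((i : ℕ) + 1)) (hDint _) j] with x h1
            rw [← h1]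
            simp only [Z, Pi.sub_apply]
            ring
        _ = _ := by
            rw [integral_add hΦZ hΦh, horth, add_zero]
            exact integral_congr_ae (ae_of_all _ fun x => vmap_mul_self hq1 _ j)
    have hder := hasDerivAt_integral_add_smul_DeltaInv hpq hX hf hgrow' hΦmeas hΦ
    have hDΦ := fun (i : Fin N) j =>
      integrable_mul_of_holderConjugate hpq.symm (hD ((i : ℕ) + 1) j) (hΦ i j)
    have hval : ∫ x, ∑ i : Fin N, ∑ j : Fin d, Dn f ((i : ℕ) + 1) x j * Φ x i j ∂μ = ρ ^ q := by
      rw [hρq, integral_finsetSum _ fun i _ => integrable_finsetSum _ fun j _ => hDΦ i j]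
      refine Finset.sum_congr rfl fun i _ => ?_
      rw [integral_finsetSum _ fun j _ => hDΦ i j]
      exact Finset.sum_congr rfl fun j _ => hpair i j
    rw [hval] at hder
    have hcomp : HasDerivAt (fun δ : ℝ => ∫ x, (f (x + (u * δ) • DeltaInv (Φ x)) - f x) ∂μ)
        (u * ρ ^ q) 0 := by
      have h1 : HasDerivAt (fun δ : ℝ => u * δ) u 0 := by
        simpa using (hasDerivAt_id (0 : ℝ)).const_mul u
      have h2 := HasDerivAt.comp (0 : ℝ) (by simpa using hder) h1
      simpa [mul_comm, Function.comp_def] using h2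
    refine hcomp.tendsto_slope_zero_right.congr fun δ => ?_
    have hfm : Continuous fun z : PathD N d × PathD N d => f z.2 - f z.1 :=
      (hf.continuous.comp continuous_snd).sub (hf.continuous.comp continuous_fst)
    rw [hπδ, integral_map (hXYm _).aemeasurable hfm.aestronglyMeasurable]
    simp [div_eq_inv_mul, Φ, Z]
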